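/- Define R̂^S(u) := Σ_{k=0}^{r} ((−1)^k/(2k)!)·a_k(u)·a_{r−k}(u)·I_{2k} ∈ Cl ⊗ Cl, where a_k(u) := Π_{j=0}^{k−1}(u/2 + j) (this is the even part of the Shankar–Witten R-operator with normalisation A(u) = 1), and for ε ∈ {+1,−1} define R̂^{εε}(u) := Σ_{k=0}^{⌊r/2⌋} (−1)^k·( Π_{m=1}^{k} (u−(2m−1))/(u+(2m−1)) )·p_{εε}·P_{r−2k}. Then for every u ∈ ℂ with u + (2m−1) ≠ 0 for all m = 1,...,⌊r/2⌋, the identity R̂^S(u) = ( Π_{k=0}^{r−1}(u+k) )·( R̂^{+1,+1}(u) + R̂^{−1,−1}(u) ) holds in Cl ⊗ Cl. -/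

import Mathlib

open scoped TensorProduct

noncomputable section

/-- The quadratic form `x₁² + ⋯ + x_{2r}²` on `ℂ^{2r}`. -/
def Qf (r : ℕ) : QuadraticForm ℂ (Fin (2*r) → ℂ) :=
  QuadraticMap.weightedSumSquares ℂ (fun _ : Fin (2*r) => (1:ℂ))

/-- The Clifford algebra of `Qf r`. -/
abbrev Cl (r : ℕ) := CliffordAlgebra (Qf r)

/-- The generators `Γ_i`. -/
def Γgen (r : ℕ) (i : Fin (2*r)) : Cl r :=
  CliffordAlgebra.ι (Qf r) (Pi.single i 1)

/-- The antisymmetrised products `Γ_{[i₁…i_k]}`. -/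
def Γbr (r k : ℕ) (i : Fin k → Fin (2*r)) : Cl r :=
  ((k.factorial : ℂ))⁻¹ •
    ∑ σ : Equiv.Perm (Fin k),
      ((Equiv.Perm.sign σ : ℤ) : ℂ) • (List.ofFn fun j => Γgen r (i (σ j))).prod

/-- The invariants `I_k ∈ Cl ⊗ Cl`. -/
def Ik (r k : ℕ) : Cl r ⊗[ℂ] Cl r :=
  ∑ i : Fin k → Fin (2*r), (Γbr r k i) ⊗ₜ[ℂ] (Γbr r k i)

/-- The split Casimir element `Ĉ = −I₂/(16(2r−2))`. -/
def sC (r : ℕ) : Cl r ⊗[ℂ] Cl r := (-(16*(2*(r:ℂ)-2))⁻¹) • Ik r 2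

/-- The top element `Γ_{2r+1} = (−i)^r Γ₁⋯Γ_{2r}`. -/
def Γtop (r : ℕ) : Cl r :=
  ((-Complex.I)^r) • (List.ofFn fun i : Fin (2*r) => Γgen r i).prod

/-- The chirality projector `p_ε = (1 + ε Γ_{2r+1})/2`. -/
def pCh (r : ℕ) (ε : ℂ) : Cl r := (2:ℂ)⁻¹ • (1 + ε • Γtop r)

/-- The chirality projectors `p_{εε'} = p_ε ⊗ p_{ε'}`. -/
def ppCh (r : ℕ) (ε ε' : ℂ) : Cl r ⊗[ℂ] Cl r := (pCh r ε) ⊗ₜ[ℂ] (pCh r ε')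

/-- The eigenvalues `c_k = (2k(2r−k) − r(2r−1))/(16(r−1))`. -/
def cEv (r k : ℕ) : ℂ :=
  (2*(k:ℂ)*(2*(r:ℂ)-(k:ℂ)) - (r:ℂ)*(2*(r:ℂ)-1)) / (16*((r:ℂ)-1))

/-- The spectral projectors `P_k = Π_{j≠k} (Ĉ − c_j)/(c_k − c_j)`. -/
def Pk (r k : ℕ) : Cl r ⊗[ℂ] Cl r :=
  (((List.range (r+1)).filter (fun j => j ≠ k)).map
    (fun j => (cEv r k - cEv r j)⁻¹ • (sC r - cEv r j • 1))).prod

/-- `P_r^S = (p_{++} + p_{−−})·P_r`. -/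
def PrS (r : ℕ) : Cl r ⊗[ℂ] Cl r := (ppCh r 1 1 + ppCh r (-1) (-1)) * Pk r r

/-- The ascending factorial `a_k(u) = (u/2)(u/2+1)⋯(u/2+k−1)`. -/
def asc (u : ℂ) (k : ℕ) : ℂ := ∏ j ∈ Finset.range k, (u/2 + (j:ℂ))

/-- The even part `R̂^S(u)` of the Shankar–Witten R-operator (with `A(u) = 1`). -/
def RShat (r : ℕ) (u : ℂ) : Cl r ⊗[ℂ] Cl r :=
  ∑ k ∈ Finset.range (r+1),
    (((-1:ℂ)^k / (((2*k).factorial : ℕ) : ℂ)) * asc u k * asc u (r-k)) • Ik r (2*k)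

/-- The braid-form solutions `R̂^{εε}(u)`. -/
def Rhat (r : ℕ) (ε : ℂ) (u : ℂ) : Cl r ⊗[ℂ] Cl r :=
  ∑ k ∈ Finset.range (r/2+1),
    ((-1:ℂ)^k * ∏ m ∈ Finset.range k, (u - (2*(m:ℂ)+1))/(u + (2*(m:ℂ)+1))) •
      (ppCh r ε ε * Pk r (r-2*k))

/-!
The elements `Γ_i ⊗ Γ_i` are commuting involutions, so an element of `Cl ⊗ Cl` is determined by its
products with their joint eigenvectors. If `p` of the eigenvalues are `-1` and `q = 2r - p` are `1`,
then `I_k` acts by `k!` times the `k`-th coefficient of `(1 - X)^p (1 + X)^q`, `Ĉ` acts by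
`c_{min(p, q)}` and `p_{++} + p_{--}` acts by `(1 + (-1)^{r + p}) / 2`. There remains a scalar
identity. Substituting `X = i tan (φ/2)`, the eigenvalue of `R̂^S(u)` is, up to a factor independent
of `p`, the integral `M_d` of `cos (d φ) sin^{u - 1} φ` over `[0, π]`, where `d = (q - p) / 2`. The
symmetry `φ ↦ π - φ` gives `M_d = 0` for odd `d`, integrating the derivative of `sin^u φ cos (d φ)`
gives `(u + d) M_{d + 1} + (u - d) M_{d - 1} = 0`, and the value at `d = 0` is the Chu-Vandermonde
identity. The three facts are algebraic in `u`, so no integral needs to converge.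
-/

section Krawtchouk

open Polynomial
open scoped Finset

/-- The generating polynomial `(1 - X)^p (1 + X)^q` of the binary Krawtchouk polynomials: its
`k`-th coefficient is the `k`-th elementary symmetric function of `p` copies of `-1` and `q` copies
of `1`. -/
def krawtchoukGen (R : Type*) [CommRing R] (p q : ℕ) : R[X] := (1 - X) ^ p * (1 + X) ^ q

variable {R : Type*} [CommRing R]

theorem krawtchoukGen_comp_neg_X (p q : ℕ) :
    (krawtchoukGen R p q).comp (-X) = krawtchoukGen R q p := by
  simp [krawtchoukGen, mul_comm, sub_eq_add_neg]

theorem natDegree_krawtchoukGen_le (p q : ℕ) : (krawtchoukGen R p q).natDegree ≤ p + q := by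
  unfold krawtchoukGen
  compute_degree

theorem mul_derivative_krawtchoukGen (p q : ℕ) :
    (1 - X ^ 2) * derivative (krawtchoukGen R p q) =
      (C (q - p : R) - C (p + q : R) * X) * krawtchoukGen R p q := by
  have mul_derivative_pow (n : ℕ) (a : R[X]) :
      a * (C (n : R) * a ^ (n - 1)) = C (n : R) * a ^ n := by
    rcases n with _ | n
    · simp
    · rw [Nat.add_sub_cancel, pow_succ]
      ring
  simp only [krawtchoukGen, derivative_mul, derivative_pow, derivative_sub, derivative_add,
    derivative_one, derivative_X, C_sub, C_add]
  linear_combination (-(1 + X) * (1 + X) ^ q) * mul_derivative_pow p (1 - X) +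
    ((1 - X) * (1 - X) ^ p) * mul_derivative_pow q (1 + X)

theorem reflect_pow {S : Type*} [Semiring S] {f : S[X]} {N : ℕ} (hf : f.natDegree ≤ N) (n : ℕ) :
    reflect (n * N) (f ^ n) = reflect N f ^ n := by
  induction n with
  | zero => simp
  | succ n ih =>
    rw [pow_succ, Nat.succ_mul, reflect_mul _ _ (natDegree_pow_le_of_le n hf) hf, ih, pow_succ]

theorem reflect_krawtchoukGen (p q : ℕ) :
    reflect (p + q) (krawtchoukGen R p q) = (-1) ^ p * krawtchoukGen R p q := by
  have hsub : (1 - X : R[X]).natDegree ≤ 1 := by compute_degree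
  have hadd : (1 + X : R[X]).natDegree ≤ 1 := by compute_degree
  have hsub_pow := reflect_pow hsub p
  have hadd_pow := reflect_pow hadd q
  simp only [mul_one, reflect_sub, reflect_add, reflect_one, reflect_one_X, pow_one]
    at hsub_pow hadd_pow
  rw [krawtchoukGen, reflect_mul _ _ ((natDegree_pow_le_of_le p hsub).trans_eq (mul_one p))
    ((natDegree_pow_le_of_le q hadd).trans_eq (mul_one q)), hsub_pow, hadd_pow, ← mul_assoc,
    ← mul_pow, neg_one_mul, neg_sub, add_comm X]

theorem two_mul_coeff_two_krawtchoukGen (p q : ℕ) :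
    2 * (krawtchoukGen R p q).coeff 2 = (q - p : R) ^ 2 - (p + q) := by
  have hcoeff_zero : (krawtchoukGen R p q).coeff 0 = 1 := by
    simp [krawtchoukGen, coeff_zero_eq_eval_zero]
  have hcoeff (n : ℕ) := congrArg (coeff · n) (mul_derivative_krawtchoukGen (R := R) p q)
  have hcoeff_one : (krawtchoukGen R p q).coeff 1 = q - p := by
    simpa [sub_mul, mul_assoc, coeff_X_pow_mul', coeff_derivative, hcoeff_zero] using hcoeff 0
  have hcoeff_two := hcoeff 1
  simp only [sub_mul, one_mul, mul_assoc, coeff_sub, coeff_C_mul, coeff_X_pow_mul', coeff_X_mul,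
    coeff_derivative, hcoeff_zero, hcoeff_one] at hcoeff_two
  norm_num at hcoeff_two
  linear_combination hcoeff_two

theorem prod_intUnits {M ι : Type*} [CommMonoid M] [Fintype ι] (f : ℤˣ → M) (s : ι → ℤˣ) :
    ∏ i, f (s i) = f (-1) ^ #{i | s i = -1} * f 1 ^ #{i | s i = 1} := by
  rw [← Finset.prod_fiberwise' _ s, UnitsInt.univ, Finset.prod_pair (by decide), mul_comm]
  simp only [Finset.prod_const]

theorem prod_one_add_C_mul_X_eq_krawtchoukGen {ι : Type*} [Fintype ι] (s : ι → ℤˣ) :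
    ∏ i, (1 + C ((s i : ℤ) : R) * X) = krawtchoukGen R #{i | s i = -1} #{i | s i = 1} := by
  rw [prod_intUnits fun ε : ℤˣ => 1 + C ((ε : ℤ) : R) * X]
  simp [krawtchoukGen, sub_eq_add_neg]

theorem coeff_prod_one_add_C_mul_X {R ι : Type*} [CommSemiring R] [Fintype ι] (s : ι → R)
    (k : ℕ) :
    (∏ i, (1 + C (s i) * X)).coeff k = ∑ t ∈ Finset.univ.powersetCard k, ∏ i ∈ t, s i := by
  simp only [Finset.prod_one_add, Finset.prod_mul_distrib, Finset.prod_const, finsetSum_coeff,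
    ← map_prod, coeff_C_mul_X_pow]
  rw [Finset.powersetCard_eq_filter, Finset.sum_filter]
  simp only [eq_comm]

theorem card_embedding_map_univ_eq {ι : Type*} [Fintype ι] [DecidableEq ι] {k : ℕ}
    {t : Finset ι} (ht : #t = k) : #{f : Fin k ↪ ι | Finset.univ.map f = t} = k.factorial := by
  have hfilter : ({f : Fin k ↪ ι | Finset.univ.map f = t} : Finset _) =
      (Finset.univ : Finset (Fin k ↪ t)).map ⟨fun f => f.trans (.subtype _), fun f g h => by
        ext j; exact DFunLike.congr_fun h j⟩ := by
    ext f
    simp only [Finset.mem_filter_univ, Finset.mem_map, Finset.mem_univ, true_and]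
    constructor
    · intro hf
      have hmem (j) : f j ∈ t := by simp [← hf]
      exact ⟨⟨fun j => ⟨f j, hmem j⟩, fun a b h => f.injective (congrArg Subtype.val h)⟩, rfl⟩
    · rintro ⟨g, rfl⟩
      refine Finset.eq_of_subset_of_card_le (fun x hx => ?_)
        (by rw [Finset.card_map, Finset.card_univ, Fintype.card_fin, ht])
      obtain ⟨j, _, rfl⟩ := Finset.mem_map.mp hx
      exact (g j).2
  simp [hfilter, Fintype.card_embedding_eq, ht, Nat.descFactorial_self]

theorem sum_embedding_prod {R ι : Type*} [CommSemiring R] [Fintype ι] (s : ι → R) (k : ℕ) :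
    ∑ f : Fin k ↪ ι, ∏ j, s (f j) = k.factorial * (∏ i, (1 + C (s i) * X)).coeff k := by
  classical
  rw [coeff_prod_one_add_C_mul_X, Finset.mul_sum,
    ← Finset.sum_fiberwise_of_maps_to (g := Finset.univ.map) (t := Finset.univ.powersetCard k)
      fun f _ => by simp [Finset.mem_powersetCard]]
  refine Finset.sum_congr rfl fun t ht => ?_
  rw [← card_embedding_map_univ_eq (Finset.mem_powersetCard.mp ht).2, ← nsmul_eq_mul,
    ← Finset.sum_const]
  refine Finset.sum_congr rfl fun f hf => ?_
  rw [← (Finset.mem_filter_univ f).mp hf, Finset.prod_map]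

end Krawtchouk

section ShankarWitten

open Polynomial

theorem sum_choose_mul_ascPochhammer_eval {R : Type*} [CommSemiring R] (x y : R) (n : ℕ) :
    ∑ k ∈ Finset.range (n + 1),
        n.choose k * ((ascPochhammer R k).eval x * (ascPochhammer R (n - k)).eval y) =
      (ascPochhammer R n).eval (x + y) := by
  induction n with
  | zero => simp
  | succ n ih =>
    rw [ascPochhammer_succ_eval, ← ih, Finset.sum_mul,
      Finset.sum_choose_succ_mul fun i j => (ascPochhammer R i).eval x * (ascPochhammer R j).eval y,
      ← Finset.sum_add_distrib]
    refine Finset.sum_congr rfl fun k hk => ?_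
    obtain ⟨l, rfl⟩ := Nat.exists_eq_add_of_le (Finset.mem_range_succ_iff.mp hk)
    rw [add_assoc, Nat.add_sub_cancel_left, Nat.add_sub_cancel_left, ascPochhammer_succ_eval,
      ascPochhammer_succ_eval, Nat.cast_add]
    ring

theorem ascPochhammer_eval_eq_prod_range {R : Type*} [CommSemiring R] (x : R) (n : ℕ) :
    (ascPochhammer R n).eval x = ∏ k ∈ Finset.range n, (x + k) := by
  induction n with
  | zero => simp
  | succ n ih => rw [ascPochhammer_succ_eval, ih, Finset.prod_range_succ]

theorem asc_succ (u : ℂ) (k : ℕ) : asc u (k + 1) = asc u k * (u / 2 + k) :=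
  Finset.prod_range_succ _ _

theorem sum_choose_mul_asc_mul_asc (u : ℂ) (n : ℕ) :
    ∑ k ∈ Finset.range (n + 1), n.choose k * (asc u k * asc u (n - k)) =
      ∏ k ∈ Finset.range n, (u + k) := by
  simpa only [asc, ascPochhammer_eval_eq_prod_range, add_halves] using
    sum_choose_mul_ascPochhammer_eval (u / 2) (u / 2) n

/-- The linear functional whose value at the generating polynomial of the elementary symmetric
functions of `s` is the eigenvalue of `RShat r u` where each `Γ_i ⊗ Γ_i` has eigenvalue `s i`. -/
def shankarWittenEv (r : ℕ) (u : ℂ) : ℂ[X] →ₗ[ℂ] ℂ :=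
  ∑ k ∈ Finset.range (r + 1), ((-1) ^ k * asc u k * asc u (r - k)) • lcoeff ℂ (2 * k)

/-- The coefficient of `p_{εε} * P_{r-2j}` in `R̂^{εε}(u)`. -/
def braidCoeff (u : ℂ) (j : ℕ) : ℂ :=
  (-1) ^ j * ∏ m ∈ Finset.range j, (u - (2 * (m : ℂ) + 1)) / (u + (2 * (m : ℂ) + 1))

theorem braidCoeff_succ (u : ℂ) (j : ℕ) :
    braidCoeff u (j + 1) = braidCoeff u j * (-((u - (2 * j + 1)) / (u + (2 * j + 1)))) := by
  rw [braidCoeff, braidCoeff, Finset.prod_range_succ]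
  ring

variable (r : ℕ) (u : ℂ)

theorem shankarWittenEv_apply (f : ℂ[X]) :
    shankarWittenEv r u f =
      ∑ k ∈ Finset.range (r + 1), (-1) ^ k * asc u k * asc u (r - k) * f.coeff (2 * k) := by
  simp [shankarWittenEv]

theorem shankarWittenEv_X_pow_two_mul {k : ℕ} (hk : k ≤ r) :
    shankarWittenEv r u (X ^ (2 * k)) = (-1) ^ k * asc u k * asc u (r - k) := by
  simp [shankarWittenEv_apply, coeff_X_pow, Nat.lt_succ_of_le hk]

theorem shankarWittenEv_X_pow_of_odd {n : ℕ} (hn : Odd n) : shankarWittenEv r u (X ^ n) = 0 := by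
  rw [shankarWittenEv_apply]
  refine Finset.sum_eq_zero fun k _ => ?_
  rw [coeff_X_pow, if_neg (by grind), mul_zero]

theorem shankarWittenEv_comp_neg_X (f : ℂ[X]) :
    shankarWittenEv r u (f.comp (-X)) = shankarWittenEv r u f := by
  have hcoeff (k : ℕ) : (f.comp (-X)).coeff (2 * k) = f.coeff (2 * k) := by
    rw [show (-X : ℂ[X]) = C (-1) * X by simp, comp_C_mul_X_coeff, pow_mul]
    simp
  simp only [shankarWittenEv_apply, hcoeff]

theorem shankarWittenEv_reflect (f : ℂ[X]) :
    shankarWittenEv r u (reflect (2 * r) f) = (-1) ^ r * shankarWittenEv r u f := by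
  rw [shankarWittenEv_apply, shankarWittenEv_apply, ← Finset.sum_range_reflect, Finset.mul_sum]
  refine Finset.sum_congr rfl fun k hk => ?_
  have hk : k ≤ r := Finset.mem_range_succ_iff.mp hk
  have hsign : (-1 : ℂ) ^ (r - k) = (-1) ^ r * (-1) ^ k := by
    rw [← pow_add]
    exact neg_one_pow_congr (by grind)
  rw [Nat.add_sub_cancel, Nat.sub_sub_self hk, coeff_reflect, revAt_le (by lia), hsign,
    show 2 * r - 2 * (r - k) = 2 * k by lia]
  ring

theorem shankarWittenEv_krawtchoukGen_comm (p q : ℕ) :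
    shankarWittenEv r u (krawtchoukGen ℂ p q) = shankarWittenEv r u (krawtchoukGen ℂ q p) := by
  rw [← krawtchoukGen_comp_neg_X, shankarWittenEv_comp_neg_X]

theorem shankarWittenEv_krawtchoukGen_eq_zero {r p q : ℕ} (hpq : p + q = 2 * r)
    (hodd : Odd (r + p)) : shankarWittenEv r u (krawtchoukGen ℂ p q) = 0 := by
  have h := shankarWittenEv_reflect r u (krawtchoukGen ℂ p q)
  have hsign : ((-1) ^ p : ℂ[X]) = C ((-1) ^ p) := by simp
  rw [← hpq, reflect_krawtchoukGen, hsign, ← smul_eq_C_mul, map_smul, smul_eq_mul] at h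
  have hprod : (-1 : ℂ) ^ r * (-1) ^ p = -1 := by rw [← pow_add, hodd.neg_one_pow]
  have hsq : (-1 : ℂ) ^ r * (-1) ^ r = 1 := by rw [← mul_pow, neg_one_mul, neg_neg, one_pow]
  linear_combination (-1 / 2 * (-1) ^ r) * h + shankarWittenEv r u (krawtchoukGen ℂ p q) / 2 *
    (hprod - hsq)

theorem shankarWittenEv_krawtchoukGen_self :
    shankarWittenEv r u (krawtchoukGen ℂ r r) = ∏ k ∈ Finset.range r, (u + k) := by
  have hexpand : krawtchoukGen ℂ r r =
      ∑ k ∈ Finset.range (r + 1), ((-1) ^ k * r.choose k : ℂ) • X ^ (2 * k) := by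
    rw [krawtchoukGen, ← mul_pow, show (1 - X) * (1 + X) = -X ^ 2 + (1 : ℂ[X]) by ring, add_pow]
    refine Finset.sum_congr rfl fun k _ => ?_
    rw [smul_eq_C_mul, neg_pow, pow_mul]
    simp only [one_pow, mul_one, map_mul, map_pow, map_neg, map_one, map_natCast]
    ring
  rw [hexpand, map_sum, ← sum_choose_mul_asc_mul_asc]
  refine Finset.sum_congr rfl fun k hk => ?_
  rw [map_smul, shankarWittenEv_X_pow_two_mul r u (Finset.mem_range_succ_iff.mp hk), smul_eq_mul]
  have hsign : (-1 : ℂ) ^ k * (-1) ^ k = 1 := by rw [← mul_pow, neg_one_mul, neg_neg, one_pow]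
  linear_combination (r.choose k * asc u k * asc u (r - k)) * hsign

theorem shankarWittenEv_X_pow_recurrence {n : ℕ} (hn : n ≤ 2 * r) :
    (u + n) * shankarWittenEv (r + 1) u (X ^ n) +
      (u + 2 * r - n) * shankarWittenEv (r + 1) u (X ^ (n + 2)) = 0 := by
  rcases Nat.even_or_odd' n with ⟨k, rfl | rfl⟩
  · have hk : k ≤ r := by lia
    rw [show 2 * k + 2 = 2 * (k + 1) by ring, shankarWittenEv_X_pow_two_mul _ _ (by lia),
      shankarWittenEv_X_pow_two_mul _ _ (by lia), Nat.add_sub_add_right, Nat.sub_add_comm hk,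
      asc_succ, asc_succ, Nat.cast_sub hk]
    push_cast
    ring
  · rw [shankarWittenEv_X_pow_of_odd _ _ (by simp), shankarWittenEv_X_pow_of_odd _ _ (by grind),
      mul_zero, mul_zero, add_zero]

-- For `X = i tan (φ / 2)`, this is the vanishing of the integral of the derivative of
-- `h(X) cos (φ / 2) ^ (2 * r) sin φ ^ u`.
theorem shankarWittenEv_derivative_eq_zero {h : ℂ[X]} (hh : h.natDegree ≤ 2 * r) :
    shankarWittenEv (r + 1) u (u • ((1 + X ^ 2) * h) + (1 - X ^ 2) * (X * derivative h) +
      (2 * r : ℂ) • (X ^ 2 * h)) = 0 := by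
  refine induction_with_natDegree_le (fun h => shankarWittenEv (r + 1) u (u • ((1 + X ^ 2) * h) +
      (1 - X ^ 2) * (X * derivative h) + (2 * r : ℂ) • (X ^ 2 * h)) = 0) (2 * r) (by simp)
    (fun n a _ hn => ?_) (fun f g _ _ hf hg => ?_) h hh
  · have hterm : u • ((1 + X ^ 2) * (C a * X ^ n)) +
        (1 - X ^ 2) * (X * derivative (C a * X ^ n)) + (2 * r : ℂ) • (X ^ 2 * (C a * X ^ n)) =
        a • ((u + n) • X ^ n + (u + 2 * r - n) • X ^ (n + 2)) := by
      have hX : X * derivative (C a * X ^ n) = C (a * n) * X ^ n := by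
        rcases n with _ | n
        · simp
        · rw [derivative_C_mul_X_pow, Nat.add_sub_cancel, pow_succ]
          ring
      simp only [hX, smul_eq_C_mul, map_add, map_sub, map_mul]
      ring
    simp only [hterm, map_smul, map_add, smul_eq_mul, shankarWittenEv_X_pow_recurrence r u hn,
      mul_zero]
  · simp only [smul_eq_C_mul, map_add, mul_add] at hf hg ⊢
    linear_combination hf + hg

theorem shankarWittenEv_krawtchoukGen_recurrence {r p q : ℕ} (hpq : p + q = 2 * r) :
    (2 * u + (q - p)) * shankarWittenEv (r + 1) u (krawtchoukGen ℂ p (q + 2)) +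
      (2 * u - (q - p)) * shankarWittenEv (r + 1) u (krawtchoukGen ℂ (p + 2) q) = 0 := by
  have h := shankarWittenEv_derivative_eq_zero r u (hpq ▸ natDegree_krawtchoukGen_le p q)
  have hN : (2 * r : ℂ) = p + q := by exact_mod_cast hpq.symm
  suffices hpoly : (2 * u + (q - p)) • krawtchoukGen ℂ p (q + 2) +
      (2 * u - (q - p)) • krawtchoukGen ℂ (p + 2) q =
        (4 : ℂ) • (u • ((1 + X ^ 2) * krawtchoukGen ℂ p q) +
          (1 - X ^ 2) * (X * derivative (krawtchoukGen ℂ p q)) +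
          (2 * r : ℂ) • (X ^ 2 * krawtchoukGen ℂ p q)) by
    simpa only [map_add, map_smul, h, smul_zero, mul_zero, smul_eq_mul] using
      congrArg (shankarWittenEv (r + 1) u) hpoly
  rw [hN]
  have hd := mul_derivative_krawtchoukGen (R := ℂ) p q
  simp only [smul_eq_C_mul, krawtchoukGen, pow_add, C_sub, C_add, C_mul, C_ofNat] at hd ⊢
  linear_combination (-4 * X) * hd

theorem shankarWittenEv_krawtchoukGen_of_even {r : ℕ} {u : ℂ}
    (hu : ∀ m : ℕ, 1 ≤ m → m ≤ r / 2 → u + (2 * (m : ℂ) - 1) ≠ 0) {j : ℕ} (hj : 2 * j ≤ r) :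
    shankarWittenEv r u (krawtchoukGen ℂ (r - 2 * j) (r + 2 * j)) =
      (∏ k ∈ Finset.range r, (u + k)) * braidCoeff u j := by
  induction j with
  | zero => simp [shankarWittenEv_krawtchoukGen_self, braidCoeff]
  | succ j ih =>
    have hne : u + (2 * j + 1) ≠ 0 := by
      have := hu (j + 1) (by lia) (by lia)
      push_cast at this
      convert this using 1
      ring
    obtain ⟨t, rfl⟩ : ∃ t, r = t + 2 * (j + 1) := ⟨r - 2 * (j + 1), by lia⟩
    have hrec := shankarWittenEv_krawtchoukGen_recurrence u (r := t + 2 * j + 1) (p := t)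
      (q := t + 4 * j + 2) (by ring)
    specialize ih (by lia)
    rw [show t + 2 * (j + 1) - 2 * j = t + 2 by lia,
      show t + 2 * (j + 1) + 2 * j = t + 4 * j + 2 by ring] at ih
    rw [show t + 2 * j + 1 + 1 = t + 2 * (j + 1) by ring, ih] at hrec
    rw [Nat.add_sub_cancel, show t + 2 * (j + 1) + 2 * (j + 1) = t + 4 * j + 2 + 2 by ring,
      braidCoeff_succ]
    push_cast at hrec
    field_simp
    linear_combination hrec / 2

/-- The eigenvalue of `R̂^{++}(u) + R̂^{--}(u)` on the joint eigenvectors of the `Γ_i ⊗ Γ_i` on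
which `Ĉ` acts by `c_m`; it vanishes for `r + m` odd because `p_{++} + p_{--}` kills these. -/
def braidEigenvalue (r : ℕ) (u : ℂ) (m : ℕ) : ℂ :=
  if Even (r + m) then braidCoeff u ((r - m) / 2) else 0

theorem shankarWittenEv_krawtchoukGen {r m : ℕ} {u : ℂ}
    (hu : ∀ m : ℕ, 1 ≤ m → m ≤ r / 2 → u + (2 * (m : ℂ) - 1) ≠ 0) (hm : m ≤ r) :
    shankarWittenEv r u (krawtchoukGen ℂ m (2 * r - m)) =
      (∏ k ∈ Finset.range r, (u + k)) * braidEigenvalue r u m := by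
  rcases Nat.even_or_odd (r + m) with heven | hodd
  · obtain ⟨j, hj⟩ : ∃ j, r = m + 2 * j := ⟨(r - m) / 2, by grind⟩
    rw [braidEigenvalue, if_pos heven, show (r - m) / 2 = j by lia,
      ← shankarWittenEv_krawtchoukGen_of_even hu (by lia), show r - 2 * j = m by lia,
      show 2 * r - m = r + 2 * j by lia]
  · rw [braidEigenvalue, if_neg (Nat.not_even_iff_odd.mpr hodd), mul_zero,
      shankarWittenEv_krawtchoukGen_eq_zero u (by lia) hodd]

end ShankarWitten

section Anticommuting

variable {A : Type*} [Ring A]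

theorem prod_ofFn_comp_swap_castSucc_succ {n : ℕ} (a : Fin (n + 1) → A) (j : Fin n)
    (hj : a j.castSucc * a j.succ = -(a j.succ * a j.castSucc)) :
    (List.ofFn (a ∘ Equiv.swap j.castSucc j.succ)).prod = -(List.ofFn a).prod := by
  induction n with
  | zero => exact j.elim0
  | succ n ih =>
    cases j using Fin.cases with
    | zero =>
      have hswap (i : Fin n) :
          Equiv.swap (0 : Fin (n + 2)) (Fin.succ 0) i.succ.succ = i.succ.succ :=
        Equiv.swap_apply_of_ne_of_ne (Fin.succ_ne_zero _)
          ((Fin.succ_injective _).ne (Fin.succ_ne_zero _))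
      simp only [List.ofFn_succ, List.prod_cons, Function.comp_apply, Fin.castSucc_zero,
        Equiv.swap_apply_left, Equiv.swap_apply_right, hswap, ← mul_assoc] at hj ⊢
      rw [hj, neg_mul, neg_neg]
    | succ j =>
      have hswap_succ (i : Fin (n + 1)) : Equiv.swap j.succ.castSucc j.succ.succ i.succ =
          (Equiv.swap j.castSucc j.succ i).succ := by
        rw [← Fin.succ_castSucc]
        exact (Fin.succ_injective _).swap_apply _ _ _
      have hswap_zero : Equiv.swap j.succ.castSucc j.succ.succ (0 : Fin (n + 2)) = 0 :=
        Equiv.swap_apply_of_ne_of_ne (Fin.succ_ne_zero j.castSucc).symm (Fin.succ_ne_zero _).symm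
      rw [List.ofFn_succ, List.ofFn_succ (f := a), List.prod_cons, List.prod_cons]
      simp only [Function.comp_apply, hswap_succ, hswap_zero]
      rw [← mul_neg, ← ih (fun i => a i.succ) j hj, Function.comp_def]

theorem prod_ofFn_comp_perm {n : ℕ} {a : Fin n → A}
    (ha : Pairwise fun i j => a i * a j = -(a j * a i)) (σ : Equiv.Perm (Fin n)) :
    (List.ofFn (a ∘ σ)).prod = (Equiv.Perm.sign σ : ℤ) • (List.ofFn a).prod := by
  rcases n with _ | n
  · simp [Subsingleton.elim σ 1]
  induction σ using Submonoid.induction_of_closure_eq_top_right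
    (Equiv.Perm.mclosure_swap_castSucc_succ n) with
  | one => simp
  | mul_right σ τ hτ ih =>
    obtain ⟨j, rfl⟩ := hτ
    have hne : j.castSucc ≠ j.succ := Fin.castSucc_lt_succ.ne
    have hanti := ha (σ.injective.ne hne)
    rw [Equiv.Perm.coe_mul, ← Function.comp_assoc, prod_ofFn_comp_swap_castSucc_succ _ j hanti, ih,
      Equiv.Perm.sign_mul, Equiv.Perm.sign_swap hne]
    simp

end Anticommuting

section JointEigenvector

theorem list_prod_mul_eigenvector {R A κ : Type*} [CommSemiring R] [Semiring A] [Algebra R A]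
    (l : List κ) (f : κ → A) (c : κ → R) (w : A) (h : ∀ a ∈ l, f a * w = c a • w) :
    (l.map f).prod * w = (l.map c).prod • w := by
  induction l with
  | nil => simp
  | cons a l ih =>
    rw [List.map_cons, List.prod_cons, mul_assoc, ih fun b hb => h b (List.mem_cons_of_mem _ hb),
      mul_smul_comm, h a List.mem_cons_self, smul_smul, List.map_cons, List.prod_cons, mul_comm]

theorem lagrange_prod_mul_eigenvector {F A : Type*} [Field F] [Ring A] [Algebra F A] {c : ℕ → F}
    {n k m : ℕ} (hc : Set.InjOn c (Set.Iic n)) (hk : k ≤ n) (hm : m ≤ n) {T w : A}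
    (hw : T * w = c m • w) :
    (((List.range (n + 1)).filter (fun j => j ≠ k)).map
      (fun j => (c k - c j)⁻¹ • (T - c j • 1))).prod * w = if k = m then w else 0 := by
  rw [list_prod_mul_eigenvector _ _ (fun j => (c k - c j)⁻¹ * (c m - c j)) w fun j _ => by
    rw [smul_mul_assoc, sub_mul, hw, smul_mul_assoc, one_mul, ← sub_smul, smul_smul]]
  split_ifs with h
  · subst h
    rw [List.prod_eq_one, one_smul]
    simp only [List.mem_map, List.mem_filter, List.mem_range, decide_eq_true_eq]
    rintro _ ⟨j, ⟨hj, hjk⟩, rfl⟩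
    exact inv_mul_cancel₀ (sub_ne_zero.mpr fun h => hjk (hc (Nat.le_of_lt_succ hj) hk h.symm))
  · rw [List.prod_eq_zero, zero_smul]
    simp only [List.mem_map, List.mem_filter, List.mem_range, decide_eq_true_eq]
    exact ⟨m, ⟨Nat.lt_succ_of_le hm, Ne.symm h⟩, by simp⟩

/-- `w` is a common eigenvector of left multiplication by the elements `y i`, with eigenvalues
`s i`; as for eigenspaces, `w = 0` is allowed. -/
def IsJointEigenvector {ι R A : Type*} [Mul A] [SMul R A] (y : ι → A) (s : ι → R) (w : A) : Prop :=
  ∀ i, y i * w = s i • w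

theorem IsJointEigenvector.prod_ofFn_mul {ι R A : Type*} [CommSemiring R] [Semiring A]
    [Algebra R A] {y : ι → A} {s : ι → R} {w : A} (hw : IsJointEigenvector y s w) {k : ℕ}
    (f : Fin k → ι) :
    (List.ofFn fun j => y (f j)).prod * w = (∏ j, s (f j)) • w := by
  rw [List.ofFn_eq_map, list_prod_mul_eigenvector _ _ (fun j => s (f j)) w fun j _ => hw (f j),
    ← List.ofFn_eq_map, List.prod_ofFn]

-- The joint eigenvectors span `A`: multiplying by `1 ± y i` for one `i` after the other splits `1`.
theorem eq_of_forall_mul_jointEigenvector {ι R A : Type*} [Finite ι] [CommRing R]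
    [Invertible (2 : R)] [Ring A] [Algebra R A] {y : ι → A} (hsq : ∀ i, y i * y i = 1)
    (hcomm : ∀ i j, Commute (y i) (y j)) {x x' : A}
    (hx : ∀ (s : ι → ℤˣ) (w : A), IsJointEigenvector y (fun i => ((s i : ℤ) : R)) w →
      x * w = x' * w) : x = x' := by
  classical
  cases nonempty_fintype ι
  suffices h : ∀ t : Finset ι, (∀ (s : ι → ℤˣ) (w : A),
      (∀ i ∈ t, y i * w = ((s i : ℤ) : R) • w) → x * w = x' * w) → x = x' from
    h Finset.univ fun s w hw => hx s w fun i => hw i (Finset.mem_univ i)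
  intro t
  induction t using Finset.induction_on with
  | empty => exact fun h => by simpa using h 1 1
  | insert a t ha ih =>
    refine fun h => ih fun s w hw => ?_
    have hsplit (ε : ℤˣ) : x * (w + ((ε : ℤ) : R) • (y a * w)) =
        x' * (w + ((ε : ℤ) : R) • (y a * w)) := by
      refine h (Function.update s a ε) _ fun i hi => ?_
      rcases Finset.mem_insert.mp hi with rfl | hi
      · have hε : ((ε : ℤ) : R) * ((ε : ℤ) : R) = 1 := by
          rw [← Int.cast_mul, ← Units.val_mul, Int.units_mul_self, Units.val_one, Int.cast_one]
        rw [Function.update_self, mul_add, mul_smul_comm, ← mul_assoc, hsq, one_mul, smul_add,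
          smul_smul, hε, one_smul, add_comm]
      · rw [Function.update_of_ne (ne_of_mem_of_not_mem hi ha), mul_add, mul_smul_comm,
          ← mul_assoc, hcomm i a, mul_assoc, hw i hi, mul_smul_comm, smul_add, smul_comm]
    have hhalf : w = ⅟(2 : R) • ((w + (((1 : ℤˣ) : ℤ) : R) • (y a * w)) +
        (w + (((-1 : ℤˣ) : ℤ) : R) • (y a * w))) := by
      symm
      rw [invOf_smul_eq_iff, two_smul]
      simp only [Units.val_neg, Units.val_one, Int.cast_neg, Int.cast_one, one_smul, neg_smul]
      abel
    rw [hhalf, mul_smul_comm, mul_smul_comm, mul_add x, mul_add x', hsplit, hsplit]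

end JointEigenvector

section Clifford

theorem Γgen_mul_self (r : ℕ) (i : Fin (2 * r)) : Γgen r i * Γgen r i = 1 := by
  have hQ : Qf r (Pi.single i 1) = 1 := by
    simp [Qf, QuadraticMap.weightedSumSquares_apply, Pi.single_apply]
  rw [Γgen, CliffordAlgebra.ι_sq_scalar, hQ, map_one]

theorem Γgen_mul_comm_of_ne (r : ℕ) {i j : Fin (2 * r)} (hij : i ≠ j) :
    Γgen r i * Γgen r j = -(Γgen r j * Γgen r i) := by
  refine CliffordAlgebra.ι_mul_ι_comm_of_isOrtho ?_
  rw [QuadraticMap.isOrtho_def]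
  simp [Qf, QuadraticMap.weightedSumSquares_apply, Pi.single_apply, mul_add,
    Finset.sum_add_distrib, hij, hij.symm]

theorem Γbr_of_injective {r k : ℕ} {i : Fin k → Fin (2 * r)} (hi : Function.Injective i) :
    Γbr r k i = (List.ofFn fun j => Γgen r (i j)).prod := by
  have hperm (σ : Equiv.Perm (Fin k)) :
      ((Equiv.Perm.sign σ : ℤ) : ℂ) • (List.ofFn fun j => Γgen r (i (σ j))).prod =
        (List.ofFn fun j => Γgen r (i j)).prod := by
    have h := prod_ofFn_comp_perm (a := fun j => Γgen r (i j))
      (fun a b hab => Γgen_mul_comm_of_ne r (hi.ne hab)) σ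
    rw [Function.comp_def] at h
    rw [h, Int.cast_smul_eq_zsmul, smul_smul, ← Units.val_mul, Int.units_mul_self, Units.val_one,
      one_smul]
  rw [Γbr, Finset.sum_congr rfl fun σ _ => hperm σ, Finset.sum_const, Finset.card_univ,
    Fintype.card_perm, Fintype.card_fin, ← Nat.cast_smul_eq_nsmul ℂ,
    inv_smul_smul₀ (Nat.cast_ne_zero.mpr k.factorial_ne_zero)]

theorem Γbr_eq_alternatization (r k : ℕ) (i : Fin k → Fin (2 * r)) :
    Γbr r k i = (k.factorial : ℂ)⁻¹ •
      MultilinearMap.alternatization (MultilinearMap.mkPiAlgebraFin ℂ k (Cl r))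
        (Γgen r ∘ i) := by
  simp [Γbr, MultilinearMap.alternatization_apply, Units.smul_def, Int.cast_smul_eq_zsmul]

theorem Γbr_of_not_injective {r k : ℕ} {i : Fin k → Fin (2 * r)} (hi : ¬Function.Injective i) :
    Γbr r k i = 0 := by
  rw [Γbr_eq_alternatization, AlternatingMap.map_eq_zero_of_not_injective _ (Γgen r ∘ i)
    fun h => hi h.of_comp, smul_zero]

/-- The commuting involutions `Γ_i ⊗ Γ_i`, in terms of which all the invariants `I_k` are
expressed. -/
def diagΓ (r : ℕ) (i : Fin (2 * r)) : Cl r ⊗[ℂ] Cl r := Γgen r i ⊗ₜ[ℂ] Γgen r i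

theorem diagΓ_mul_self (r : ℕ) (i : Fin (2 * r)) : diagΓ r i * diagΓ r i = 1 := by
  rw [diagΓ, Algebra.TensorProduct.tmul_mul_tmul, Γgen_mul_self, Algebra.TensorProduct.one_def]

theorem commute_diagΓ (r : ℕ) (i j : Fin (2 * r)) : Commute (diagΓ r i) (diagΓ r j) := by
  rcases eq_or_ne i j with rfl | hij
  · exact Commute.refl _
  · rw [Commute, SemiconjBy, diagΓ, diagΓ, Algebra.TensorProduct.tmul_mul_tmul,
      Algebra.TensorProduct.tmul_mul_tmul, Γgen_mul_comm_of_ne r hij, TensorProduct.neg_tmul,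
      TensorProduct.tmul_neg, neg_neg]

theorem list_prod_tmul_self {R A : Type*} [CommSemiring R] [Semiring A] [Algebra R A]
    (l : List A) : l.prod ⊗ₜ[R] l.prod = (l.map fun a => a ⊗ₜ[R] a).prod := by
  induction l with
  | nil => rfl
  | cons a l ih =>
    rw [List.prod_cons, ← Algebra.TensorProduct.tmul_mul_tmul, ih, List.map_cons, List.prod_cons]

theorem prod_ofFn_Γgen_tmul_self {r k : ℕ} (i : Fin k → Fin (2 * r)) :
    (List.ofFn fun j => Γgen r (i j)).prod ⊗ₜ[ℂ] (List.ofFn fun j => Γgen r (i j)).prod =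
      (List.ofFn fun j => diagΓ r (i j)).prod := by
  rw [list_prod_tmul_self, List.map_ofFn]
  rfl

theorem Ik_eq_sum_embedding (r k : ℕ) :
    Ik r k = ∑ f : Fin k ↪ Fin (2 * r), (List.ofFn fun j => diagΓ r (f j)).prod := by
  symm
  refine Finset.sum_of_injOn DFunLike.coe DFunLike.coe_injective.injOn (by simp)
    (fun i _ hi => ?_) fun f _ => ?_
  · rw [Γbr_of_not_injective, TensorProduct.zero_tmul]
    exact fun h => hi ⟨⟨i, h⟩, by simp⟩
  · rw [Γbr_of_injective f.injective, prod_ofFn_Γgen_tmul_self]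

theorem ppCh_add_ppCh (r : ℕ) :
    ppCh r 1 1 + ppCh r (-1) (-1) =
      (2 : ℂ)⁻¹ • (1 + (-1 : ℂ) ^ r • (List.ofFn fun i => diagΓ r i).prod) := by
  have hΓtop : Γtop r ⊗ₜ[ℂ] Γtop r = (-1 : ℂ) ^ r • (List.ofFn fun i => diagΓ r i).prod := by
    rw [Γtop, TensorProduct.smul_tmul_smul, prod_ofFn_Γgen_tmul_self fun i => i, ← mul_pow,
      neg_mul_neg, Complex.I_mul_I]
  rw [← hΓtop]
  simp only [ppCh, pCh, TensorProduct.tmul_smul, ← TensorProduct.smul_tmul',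
    TensorProduct.add_tmul, TensorProduct.tmul_add, one_smul, neg_smul, TensorProduct.neg_tmul,
    TensorProduct.tmul_neg, Algebra.TensorProduct.one_def]
  module

theorem Rhat_add_Rhat (r : ℕ) (u : ℂ) :
    Rhat r 1 u + Rhat r (-1) u = (ppCh r 1 1 + ppCh r (-1) (-1)) *
      ∑ k ∈ Finset.range (r / 2 + 1), braidCoeff u k • Pk r (r - 2 * k) := by
  simp only [Rhat, braidCoeff, ← Finset.sum_add_distrib, add_mul, smul_add, Finset.mul_sum,
    mul_smul_comm]

theorem cEv_two_mul_sub {r m : ℕ} (hm : m ≤ 2 * r) : cEv r (2 * r - m) = cEv r m := by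
  rw [cEv, cEv, Nat.cast_sub hm]
  push_cast
  ring

theorem cEv_injOn {r : ℕ} (hr : r ≠ 1) : Set.InjOn (cEv r) (Set.Iic r) := by
  intro j hj k hk h
  have hr1 : (r : ℂ) - 1 ≠ 0 := sub_ne_zero.mpr (by exact_mod_cast hr)
  rw [cEv, cEv, div_left_inj' (mul_ne_zero (by norm_num) hr1)] at h
  obtain ⟨a, ha⟩ := Nat.exists_eq_add_of_le (Set.mem_Iic.mp hj)
  obtain ⟨b, hb⟩ := Nat.exists_eq_add_of_le (Set.mem_Iic.mp hk)
  have hsq : (a : ℂ) ^ 2 = b ^ 2 := by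
    have ha' : (r : ℂ) = j + a := by exact_mod_cast ha
    have hb' : (r : ℂ) = k + b := by exact_mod_cast hb
    linear_combination -h / 2 - (r - j + a) * ha' + (r - k + b) * hb'
  have hab : a = b := Nat.pow_left_injective two_ne_zero (by exact_mod_cast hsq)
  lia

end Clifford

section Eigenvalues

open scoped Finset

theorem card_eq_neg_one_add_card_eq_one {ι : Type*} [Fintype ι] (s : ι → ℤˣ) :
    #{i | s i = -1} + #{i | s i = 1} = Fintype.card ι := by
  rw [← Finset.card_univ, add_comm, Finset.card_eq_sum_card_fiberwise (s := Finset.univ) (f := s)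
    (t := Finset.univ) (by simp [Int.units_eq_one_or]), UnitsInt.univ, Finset.sum_pair (by decide)]

/-- The number of occurrences of the less frequent sign among the `s i`. When `s` is the family of
eigenvalues of the `Γ_i ⊗ Γ_i`, it is the index `m` for which `Ĉ` has eigenvalue `c_m`. -/
def minSignCount {ι : Type*} [Fintype ι] (s : ι → ℤˣ) : ℕ := min #{i | s i = -1} #{i | s i = 1}

variable {r : ℕ} {s : Fin (2 * r) → ℤˣ} {w : Cl r ⊗[ℂ] Cl r}

variable (s) in
theorem minSignCount_cases :
    (#{i | s i = -1} = minSignCount s ∧ #{i | s i = 1} = 2 * r - minSignCount s) ∨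
      (#{i | s i = -1} = 2 * r - minSignCount s ∧ #{i | s i = 1} = minSignCount s) := by
  have h := card_eq_neg_one_add_card_eq_one s
  rw [Fintype.card_fin] at h
  unfold minSignCount
  lia

variable (s) in
theorem minSignCount_le : minSignCount s ≤ r := by
  have h := card_eq_neg_one_add_card_eq_one s
  rw [Fintype.card_fin] at h
  unfold minSignCount
  lia

theorem Ik_mul_eigenvector (hw : IsJointEigenvector (diagΓ r) (fun i => ((s i : ℤ) : ℂ)) w)
    (k : ℕ) : Ik r k * w =
      (k.factorial * (krawtchoukGen ℂ #{i | s i = -1} #{i | s i = 1}).coeff k) • w := by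
  rw [← prod_one_add_C_mul_X_eq_krawtchoukGen, ← sum_embedding_prod, Ik_eq_sum_embedding,
    Finset.sum_mul, Finset.sum_smul]
  exact Finset.sum_congr rfl fun f _ => hw.prod_ofFn_mul f

theorem RShat_mul_eigenvector (hw : IsJointEigenvector (diagΓ r) (fun i => ((s i : ℤ) : ℂ)) w)
    (u : ℂ) : RShat r u * w =
      shankarWittenEv r u (krawtchoukGen ℂ (minSignCount s) (2 * r - minSignCount s)) • w := by
  have hev : RShat r u * w =
      shankarWittenEv r u (krawtchoukGen ℂ #{i | s i = -1} #{i | s i = 1}) • w := by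
    rw [RShat, shankarWittenEv_apply, Finset.sum_mul, Finset.sum_smul]
    refine Finset.sum_congr rfl fun k _ => ?_
    have hfactorial : ((2 * k).factorial : ℂ) ≠ 0 :=
      Nat.cast_ne_zero.mpr (Nat.factorial_ne_zero _)
    rw [smul_mul_assoc, Ik_mul_eigenvector hw, smul_smul]
    congr 1
    field_simp
  rcases minSignCount_cases s with ⟨hp, hq⟩ | ⟨hp, hq⟩
  · rw [hev, hp, hq]
  · rw [hev, hp, hq, shankarWittenEv_krawtchoukGen_comm]

theorem sC_mul_eigenvector (hw : IsJointEigenvector (diagΓ r) (fun i => ((s i : ℤ) : ℂ)) w) :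
    sC r * w = cEv r (minSignCount s) • w := by
  have hev : sC r * w = cEv r #{i | s i = -1} • w := by
    have hcard : (#{i | s i = -1} + #{i | s i = 1} : ℂ) = 2 * r := by
      exact_mod_cast (card_eq_neg_one_add_card_eq_one s).trans (Fintype.card_fin _)
    rw [sC, smul_mul_assoc, Ik_mul_eigenvector hw, smul_smul, Nat.factorial_two, Nat.cast_two,
      two_mul_coeff_two_krawtchoukGen, hcard, eq_sub_of_add_eq' hcard, cEv,
      show (16 * (2 * r - 2) : ℂ) = 2 * (16 * (r - 1)) by ring, mul_inv, div_eq_mul_inv]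
    congr 1
    ring
  rcases minSignCount_cases s with ⟨hp, -⟩ | ⟨hp, -⟩
  · rw [hev, hp]
  · rw [hev, hp, cEv_two_mul_sub (by linarith [minSignCount_le s])]

theorem Pk_mul_eigenvector (hr : r ≠ 1)
    (hw : IsJointEigenvector (diagΓ r) (fun i => ((s i : ℤ) : ℂ)) w) {k : ℕ} (hk : k ≤ r) :
    Pk r k * w = if k = minSignCount s then w else 0 :=
  lagrange_prod_mul_eigenvector (cEv_injOn hr) hk (minSignCount_le s) (sC_mul_eigenvector hw)

variable (s) in
theorem prod_eq_neg_one_pow_minSignCount : ∏ i, ((s i : ℤ) : ℂ) = (-1) ^ minSignCount s := by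
  have hp := minSignCount_cases s
  have hm := minSignCount_le s
  rw [prod_intUnits fun ε : ℤˣ => ((ε : ℤ) : ℂ)]
  simp only [Units.val_neg, Units.val_one, Int.cast_neg, Int.cast_one, one_pow, mul_one]
  exact neg_one_pow_congr (by grind)

theorem ppCh_add_ppCh_mul_eigenvector
    (hw : IsJointEigenvector (diagΓ r) (fun i => ((s i : ℤ) : ℂ)) w) :
    (ppCh r 1 1 + ppCh r (-1) (-1)) * w = if Even (r + minSignCount s) then w else 0 := by
  rw [ppCh_add_ppCh, smul_mul_assoc, add_mul, one_mul, smul_mul_assoc,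
    hw.prod_ofFn_mul fun i => i, prod_eq_neg_one_pow_minSignCount, smul_smul, ← pow_add]
  split_ifs with h
  · rw [h.neg_one_pow]
    module
  · rw [(Nat.not_even_iff_odd.mp h).neg_one_pow]
    module

theorem Rhat_add_Rhat_mul_eigenvector (hr : r ≠ 1)
    (hw : IsJointEigenvector (diagΓ r) (fun i => ((s i : ℤ) : ℂ)) w) (u : ℂ) :
    (Rhat r 1 u + Rhat r (-1) u) * w = braidEigenvalue r u (minSignCount s) • w := by
  have hm := minSignCount_le s
  simp only [Rhat_add_Rhat, mul_assoc, Finset.sum_mul, smul_mul_assoc,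
    Pk_mul_eigenvector hr hw (Nat.sub_le r _)]
  rw [braidEigenvalue]
  split_ifs with heven
  · rw [Finset.sum_eq_single_of_mem ((r - minSignCount s) / 2) (by grind) fun k hk hne => by
      rw [if_neg (by grind), smul_zero], if_pos (by grind), mul_smul_comm,
      ppCh_add_ppCh_mul_eigenvector hw, if_pos heven]
  · rw [Finset.sum_eq_zero fun k hk => by rw [if_neg (by grind), smul_zero], mul_zero, zero_smul]

end Eigenvalues

/-- `R̂^S(u) = (Π_{k=0}^{r−1}(u+k))·(R̂^{++}(u) + R̂^{−−}(u))`. -/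
theorem RShat_eq_sum_Rhat (r : ℕ) (hr : 2 ≤ r) (u : ℂ)
    (hu : ∀ m : ℕ, 1 ≤ m → m ≤ r/2 → u + (2*(m:ℂ) - 1) ≠ 0) :
    RShat r u = (∏ k ∈ Finset.range r, (u + (k:ℂ))) • (Rhat r 1 u + Rhat r (-1) u) := by
  refine eq_of_forall_mul_jointEigenvector (R := ℂ) (diagΓ_mul_self r) (commute_diagΓ r)
    fun s w hw => ?_
  rw [RShat_mul_eigenvector hw, shankarWittenEv_krawtchoukGen hu (minSignCount_le s),
    smul_mul_assoc, Rhat_add_Rhat_mul_eigenvector (by lia) hw, smul_smul]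

end
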